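/- arXiv:1207.5839 — 3 statements merged into one kernel-verified Lean document; each statement's English description precedes it below -/
import Mathlib

section
/- The product of any 2B+1 consecutive delayed transition matrices is non-expansive with respect to the maximum and minimum over occupied coordinates: for every t ≥ 0 and every realization of the delays, max{ x̂_i(t+2B+1) : i occupied at time t+2B+1 } ≤ max{ x̂_i(t) : i occupied at time t } and min{ x̂_i(t+2B+1) : i occupied at time t+2B+1 } ≥ min{ x̂_i(t) : i occupied at time t }. -/
open Matrix Filter BigOperators
open scoped Classical

noncomputable section

/-- A directed graph on `Fin n` with `m` directed edges, edge `e` going from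
`src e` to `tgt e`. -/
structure DGraph (n m : ℕ) where
  src : Fin m → Fin n
  tgt : Fin m → Fin n

/-- Hypotheses of the random-delay consensus model: no self-loops, distinct edges,
`P` row stochastic respecting `G` (hence with positive diagonal), and `G` strongly
connected. -/
structure DGraph.Valid {n m : ℕ} (G : DGraph n m) (P : Matrix (Fin n) (Fin n) ℝ) : Prop where
  noSelf : ∀ e, G.src e ≠ G.tgt e
  edgeInj : ∀ e e', G.src e = G.src e' → G.tgt e = G.tgt e' → e = e'
  nonneg : ∀ i j, 0 ≤ P i j
  rowSum : ∀ i, ∑ j, P i j = 1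
  support : ∀ i j, 0 < P i j ↔ i = j ∨ ∃ e, G.src e = j ∧ G.tgt e = i
  connected : ∀ i j : Fin n,
    Relation.ReflTransGen (fun a b => ∃ e, G.src e = a ∧ G.tgt e = b) i j

/-- Delay nodes: for every directed edge `e : Fin m`, every chain-length index
`ℓ : Fin B` (the parallel chain modelling a delay of `ℓ.1 + 1`), and every
position `k : Fin B` with `k ≤ ℓ` along that chain.  There are `m·B(B+1)/2`
of them in total. -/
def DelayNode (m B : ℕ) : Type :=
  {q : Fin m × Fin B × Fin B // q.2.2.1 ≤ q.2.1.1}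

instance (m B : ℕ) : Fintype (DelayNode m B) := by
  unfold DelayNode; infer_instance

instance (m B : ℕ) : DecidableEq (DelayNode m B) := by
  unfold DelayNode; infer_instance

namespace RandomDelay

variable {n m B : ℕ}

/-- The edge a delay node belongs to. -/
def edgeOf (d : DelayNode m B) : Fin m := d.val.1
/-- The chain (of length `lenIdx d + 1`) a delay node belongs to. -/
def lenIdx (d : DelayNode m B) : ℕ := d.val.2.1.1
/-- The (0-indexed) position of a delay node along its chain. -/
def posIdx (d : DelayNode m B) : ℕ := d.val.2.2.1
/-- `d` is the terminal node of its chain. -/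
def isTerminal (d : DelayNode m B) : Prop := d.val.2.2 = d.val.2.1

/-- The fixed block-diagonal forward-shift matrix `C`: a message at position `k`
of a chain moves to position `k+1` of the same chain. -/
def Cmat (m B : ℕ) : Matrix (DelayNode m B) (DelayNode m B) ℝ := fun d d' =>
  if d.val.1 = d'.val.1 ∧ d.val.2.1 = d'.val.2.1 ∧ posIdx d = posIdx d' + 1 then 1 else 0

/-- The fixed delivery matrix `J`: `J i d = 1` iff `d` is the terminal node of a
chain on an edge pointing into compute node `i`. -/
def Jmat (G : DGraph n m) (B : ℕ) : Matrix (Fin n) (DelayNode m B) ℝ := fun i d =>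
  if G.tgt (edgeOf d) = i ∧ isTerminal d then 1 else 0

/-- `L(t)`: zero-delay deliveries.  `L t i j = 1` iff at iteration `t` node `j`
sends its message on the edge `j → i` with zero delay. -/
def Lmat (G : DGraph n m) (del : ℕ → Fin m → Fin (B + 1)) (t : ℕ) :
    Matrix (Fin n) (Fin n) ℝ := fun i j =>
  if ∃ e, G.src e = j ∧ G.tgt e = i ∧ (del t e).1 = 0 then 1 else 0

/-- `R(t)`: routing of messages into delay chains.  `R t d j = 1` iff `d` is the
first node of the chain of length `ℓ+1` on an edge out of `j`, and at iteration
`t` node `j`'s message on that edge is assigned delay `ℓ+1`. -/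
def Rmat (G : DGraph n m) (del : ℕ → Fin m → Fin (B + 1)) (t : ℕ) :
    Matrix (DelayNode m B) (Fin n) ℝ := fun d j =>
  if G.src (edgeOf d) = j ∧ posIdx d = 0 ∧ (del t (edgeOf d)).1 = lenIdx d + 1 then 1 else 0

/-- Occupancy vector: `φ 0 = 0` and `φ t = R(t)·1 + C·φ(t-1)`. -/
def phi (G : DGraph n m) (del : ℕ → Fin m → Fin (B + 1)) : ℕ → DelayNode m B → ℝ
  | 0 => fun _ => 0
  | t + 1 => Rmat G del (t + 1) *ᵥ (fun _ => 1) + Cmat m B *ᵥ phi G del t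

/-- `ŵ_{ij}(t)`: the number of delay chains from `j` to `i` whose terminal node is
occupied at time `t - 1`, i.e. the number of delayed messages `i` receives from `j`
at iteration `t`. -/
def wgt (G : DGraph n m) (del : ℕ → Fin m → Fin (B + 1)) (t : ℕ) (i j : Fin n) : ℕ :=
  (Finset.univ.filter (fun d : DelayNode m B =>
    G.tgt (edgeOf d) = i ∧ G.src (edgeOf d) = j ∧ isTerminal d ∧
      phi G del (t - 1) d = 1)).card

/-- Total number of messages (delayed plus undelayed) that `i` receives from `j`
at iteration `t`, as a real number. -/
def denom (G : DGraph n m) (del : ℕ → Fin m → Fin (B + 1)) (t : ℕ) (i j : Fin n) : ℝ :=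
  (wgt G del t i j : ℝ) + Lmat G del t i j

/-- `P̄[L(t)]`: each entry `1` of `L(t)` (a zero-delay message from `j` to `i`) is
replaced with the weight `P i j / (ŵ_{ij} + L_{ij}(t))`. -/
def PLmat (G : DGraph n m) (P : Matrix (Fin n) (Fin n) ℝ)
    (del : ℕ → Fin m → Fin (B + 1)) (t : ℕ) : Matrix (Fin n) (Fin n) ℝ := fun i j =>
  Lmat G del t i j * (P i j / denom G del t i j)

/-- `P̄[φ(t-1)]`: each entry `1` of `J·diag(φ(t-1))` (a delayed message from `j`
delivered to `i`) is replaced with the weight `P i j / (ŵ_{ij} + L_{ij}(t))`. -/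
def PFmat (G : DGraph n m) (P : Matrix (Fin n) (Fin n) ℝ)
    (del : ℕ → Fin m → Fin (B + 1)) (t : ℕ) : Matrix (Fin n) (DelayNode m B) ℝ := fun i d =>
  Jmat G B i d * phi G del (t - 1) d *
    (P i (G.src (edgeOf d)) / denom G del t i (G.src (edgeOf d)))

/-- Top-left block `P̂₁₁(t) = I − diag(P̄[φ(t−1)]·1_b + P̄[L(t)]·1_n) + P̄[L(t)]`. -/
def P11 (G : DGraph n m) (P : Matrix (Fin n) (Fin n) ℝ)
    (del : ℕ → Fin m → Fin (B + 1)) (t : ℕ) : Matrix (Fin n) (Fin n) ℝ :=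
  1 - Matrix.diagonal (fun i => (∑ d, PFmat G P del t i d) + (∑ j, PLmat G P del t i j))
    + PLmat G P del t

/-- The delayed transition matrix
`P̂(t) = [[P̂₁₁(t), P̄[φ(t−1)]], [R(t), C]]`. -/
def Phat (G : DGraph n m) (P : Matrix (Fin n) (Fin n) ℝ)
    (del : ℕ → Fin m → Fin (B + 1)) (t : ℕ) :
    Matrix (Fin n ⊕ DelayNode m B) (Fin n ⊕ DelayNode m B) ℝ :=
  Matrix.fromBlocks (P11 G P del t) (PFmat G P del t) (Rmat G del t) (Cmat m B)

/-- The state: `x̂(0) = (x(0), 0_b)` and `x̂(t) = P̂(t)·x̂(t−1)`. -/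
def xhat (G : DGraph n m) (P : Matrix (Fin n) (Fin n) ℝ)
    (del : ℕ → Fin m → Fin (B + 1)) (x0 : Fin n → ℝ) :
    ℕ → (Fin n ⊕ DelayNode m B) → ℝ
  | 0 => Sum.elim x0 (fun _ => 0)
  | t + 1 => Phat G P del (t + 1) *ᵥ xhat G P del x0 t

/-- The product `M(t) = P̂(t)·P̂(t−1)⋯P̂(1)` (with `M(0) = I`). -/
def Mprod (G : DGraph n m) (P : Matrix (Fin n) (Fin n) ℝ)
    (del : ℕ → Fin m → Fin (B + 1)) :
    ℕ → Matrix (Fin n ⊕ DelayNode m B) (Fin n ⊕ DelayNode m B) ℝ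
  | 0 => 1
  | t + 1 => Phat G P del (t + 1) * Mprod G P del t

/-- Top-left `n × n` block of `M(t)`. -/
def M1 (G : DGraph n m) (P : Matrix (Fin n) (Fin n) ℝ)
    (del : ℕ → Fin m → Fin (B + 1)) (t : ℕ) : Matrix (Fin n) (Fin n) ℝ :=
  fun i j => Mprod G P del t (Sum.inl i) (Sum.inl j)

/-- Bottom-left `b × n` block of `M(t)`. -/
def M2 (G : DGraph n m) (P : Matrix (Fin n) (Fin n) ℝ)
    (del : ℕ → Fin m → Fin (B + 1)) (t : ℕ) : Matrix (DelayNode m B) (Fin n) ℝ :=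
  fun d j => Mprod G P del t (Sum.inr d) (Sum.inl j)

/-- A node is occupied at time `t` if it is a compute node, or a delay node `d`
with `φ_d(t) = 1`. -/
def occupied (G : DGraph n m) (del : ℕ → Fin m → Fin (B + 1)) (t : ℕ) :
    (Fin n ⊕ DelayNode m B) → Prop
  | Sum.inl _ => True
  | Sum.inr d => phi G del t d = 1

/-- Maximum of the state over the occupied nodes at time `t`. -/
def occMax (G : DGraph n m) (P : Matrix (Fin n) (Fin n) ℝ)
    (del : ℕ → Fin m → Fin (B + 1)) (x0 : Fin n → ℝ) (t : ℕ) : ℝ :=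
  sSup {y : ℝ | ∃ v, occupied G del t v ∧ xhat G P del x0 t v = y}

/-- Minimum of the state over the occupied nodes at time `t`. -/
def occMin (G : DGraph n m) (P : Matrix (Fin n) (Fin n) ℝ)
    (del : ℕ → Fin m → Fin (B + 1)) (x0 : Fin n → ℝ) (t : ℕ) : ℝ :=
  sInf {y : ℝ | ∃ v, occupied G del t v ∧ xhat G P del x0 t v = y}

end RandomDelay

end

namespace RandomDelay

variable {n m B : ℕ}

/-- Each row of `C` vanishes at the head of a chain and is otherwise the indicator of the
preceding node, and correspondingly for the rows of `R`. -/
lemma delay_row_cases (G : DGraph n m) (del : ℕ → Fin m → Fin (B + 1)) (t : ℕ)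
    (d : DelayNode m B) :
    ((∀ d', Cmat m B d d' = 0) ∧ ∀ j, Rmat G del t d j =
      if G.src (edgeOf d) = j then
        (if (del t (edgeOf d)).1 = lenIdx d + 1 then 1 else 0) else 0) ∨
    ∃ p : DelayNode m B, (∀ d', Cmat m B d d' = if d' = p then 1 else 0) ∧
      ∀ j, Rmat G del t d j = 0 := by
  by_cases h : posIdx d = 0
  · left
    refine ⟨fun d' => ?_, fun j => ?_⟩
    · simp [Cmat, h]
    · simp only [Rmat, h, true_and, ite_and]
  · right
    have hlen := d.2
    have hB := d.1.2.2.2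
    simp only [posIdx] at h
    refine ⟨⟨(d.1.1, d.1.2.1, ⟨d.1.2.2.1 - 1, by omega⟩), ?_⟩, fun d' => ?_, fun j => ?_⟩
    · dsimp only; omega
    · obtain ⟨⟨e, l, k⟩, hd⟩ := d
      obtain ⟨⟨e', l', k'⟩, hd'⟩ := d'
      dsimp only at h hlen hB
      have key : (e = e' ∧ l = l' ∧ k.1 = k'.1 + 1) ↔
          (⟨(e', l', k'), hd'⟩ : DelayNode m B) =
            ⟨(e, l, ⟨k.1 - 1, by omega⟩), by dsimp only; omega⟩ := by
        rw [Subtype.mk.injEq, Prod.mk.injEq, Prod.mk.injEq, Fin.ext_iff (a := k')]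
        constructor
        · rintro ⟨rfl, rfl, h3⟩
          exact ⟨rfl, rfl, by simp [h3]⟩
        · rintro ⟨rfl, rfl, h3⟩
          exact ⟨rfl, rfl, by dsimp only at h3; omega⟩
      simp only [Cmat, posIdx, key]
      congr
    · simp [Rmat, posIdx, h]

/-- The occupancy vector takes values in `{0, 1}`. -/
lemma phi_eq_zero_or_one (G : DGraph n m) (del : ℕ → Fin m → Fin (B + 1)) (t : ℕ)
    (d : DelayNode m B) : phi G del t d = 0 ∨ phi G del t d = 1 := by
  induction t generalizing d with
  | zero => exact Or.inl rfl
  | succ t ih =>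
    rcases delay_row_cases G del (t + 1) d with ⟨hC, hR⟩ | ⟨p, hC, hR⟩
    · have : phi G del (t + 1) d =
          if (del (t + 1) (edgeOf d)).1 = lenIdx d + 1 then 1 else 0 := by
        simp [phi, mulVec, dotProduct, hC, hR]
      rw [this]
      split_ifs <;> simp
    · have : phi G del (t + 1) d = phi G del t p := by
        simp [phi, mulVec, dotProduct, hC, hR]
      rw [this]
      exact ih p

lemma Lmat_nonneg (G : DGraph n m) (del : ℕ → Fin m → Fin (B + 1)) (t : ℕ) (i j : Fin n) :
    0 ≤ Lmat G del t i j := by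
  unfold Lmat; split_ifs <;> simp

lemma denom_nonneg (G : DGraph n m) (del : ℕ → Fin m → Fin (B + 1)) (t : ℕ) (i j : Fin n) :
    0 ≤ denom G del t i j :=
  add_nonneg (Nat.cast_nonneg _) (Lmat_nonneg G del t i j)

lemma PLmat_nonneg {G : DGraph n m} {P : Matrix (Fin n) (Fin n) ℝ} (hP : ∀ i j, 0 ≤ P i j)
    (del : ℕ → Fin m → Fin (B + 1)) (t : ℕ) (i j : Fin n) : 0 ≤ PLmat G P del t i j :=
  mul_nonneg (Lmat_nonneg G del t i j) (div_nonneg (hP i j) (denom_nonneg G del t i j))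

lemma PFmat_nonneg {G : DGraph n m} {P : Matrix (Fin n) (Fin n) ℝ} (hP : ∀ i j, 0 ≤ P i j)
    (del : ℕ → Fin m → Fin (B + 1)) (t : ℕ) (i : Fin n) (d : DelayNode m B) :
    0 ≤ PFmat G P del t i d := by
  refine mul_nonneg (mul_nonneg ?_ ?_) (div_nonneg (hP _ _) (denom_nonneg G del t _ _))
  · unfold Jmat; split_ifs <;> simp
  · rcases phi_eq_zero_or_one G del (t - 1) d with h | h <;> simp [h]

/-- The delayed messages from `j` to `i` carry total weight `ŵ_{ij}` times the common weight. -/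
lemma sum_PFmat_fiber (G : DGraph n m) (P : Matrix (Fin n) (Fin n) ℝ)
    (del : ℕ → Fin m → Fin (B + 1)) (t : ℕ) (i j : Fin n) :
    ∑ d with G.src (edgeOf d) = j, PFmat G P del t i d
      = (wgt G del t i j : ℝ) * (P i j / denom G del t i j) := by
  rw [wgt, Finset.card_filter, Nat.cast_sum, Finset.sum_mul, Finset.sum_filter]
  refine Finset.sum_congr rfl fun d _ => ?_
  by_cases hj : G.src (edgeOf d) = j
  · rcases phi_eq_zero_or_one G del (t - 1) d with h | h <;>
      simp [PFmat, Jmat, hj, h]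
  · simp [hj]

/-- The messages received by a compute node carry total weight at most one. -/
lemma sum_received_le_one {G : DGraph n m} {P : Matrix (Fin n) (Fin n) ℝ}
    (hP : ∀ i j, 0 ≤ P i j) (hsum : ∀ i, ∑ j, P i j = 1)
    (del : ℕ → Fin m → Fin (B + 1)) (t : ℕ) (i : Fin n) :
    (∑ d, PFmat G P del t i d) + ∑ j, PLmat G P del t i j ≤ 1 := by
  rw [← hsum i, ← Finset.sum_fiberwise Finset.univ (fun d => G.src (edgeOf d)),
    ← Finset.sum_add_distrib]
  refine Finset.sum_le_sum fun j _ => ?_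
  rw [sum_PFmat_fiber, PLmat, ← add_mul]
  change denom G del t i j * (P i j / denom G del t i j) ≤ P i j
  by_cases h : denom G del t i j = 0
  · simpa [h] using hP i j
  · rw [mul_div_cancel₀ _ h]

/-- An upper bound on the occupied coordinates is preserved by one transition. -/
lemma Phat_mulVec_le {G : DGraph n m} {P : Matrix (Fin n) (Fin n) ℝ}
    (hP : ∀ i j, 0 ≤ P i j) (hsum : ∀ i, ∑ j, P i j = 1)
    (del : ℕ → Fin m → Fin (B + 1)) (t : ℕ) {y : Fin n ⊕ DelayNode m B → ℝ} {c : ℝ}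
    (hy : ∀ v, occupied G del t v → y v ≤ c) (v : Fin n ⊕ DelayNode m B)
    (hv : occupied G del (t + 1) v) : (Phat G P del (t + 1) *ᵥ y) v ≤ c := by
  rcases v with i | d
  · have hF : ∑ d, PFmat G P del (t + 1) i d * y (Sum.inr d)
        ≤ ∑ d, PFmat G P del (t + 1) i d * c := by
      refine Finset.sum_le_sum fun d _ => ?_
      rcases phi_eq_zero_or_one G del t d with h | h
      · simp [PFmat, h]
      · exact mul_le_mul_of_nonneg_left (hy (Sum.inr d) h) (PFmat_nonneg hP del _ i d)
    have hL : ∑ j, PLmat G P del (t + 1) i j * y (Sum.inl j)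
        ≤ ∑ j, PLmat G P del (t + 1) i j * c :=
      Finset.sum_le_sum fun j _ =>
        mul_le_mul_of_nonneg_left (hy (Sum.inl j) trivial) (PLmat_nonneg hP del _ i j)
    rw [← Finset.sum_mul] at hF hL
    have hrow : (Phat G P del (t + 1) *ᵥ y) (Sum.inl i)
        = (1 - ((∑ d, PFmat G P del (t + 1) i d) + ∑ j, PLmat G P del (t + 1) i j))
            * y (Sum.inl i)
          + ∑ j, PLmat G P del (t + 1) i j * y (Sum.inl j)
          + ∑ d, PFmat G P del (t + 1) i d * y (Sum.inr d) := by
      simp [Phat, P11, mulVec, dotProduct, Matrix.one_apply, Matrix.diagonal_apply, add_mul,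
        sub_mul, Finset.sum_add_distrib, Finset.sum_sub_distrib]
    have hdiag := mul_le_mul_of_nonneg_left (hy (Sum.inl i) trivial)
      (sub_nonneg.2 (sum_received_le_one (G := G) hP hsum del (t + 1) i))
    rw [hrow]
    linarith
  · change phi G del (t + 1) d = 1 at hv
    rcases delay_row_cases G del (t + 1) d with ⟨hC, hR⟩ | ⟨p, hC, hR⟩
    · have hsent : (del (t + 1) (edgeOf d)).1 = lenIdx d + 1 := by
        simpa [phi, mulVec, dotProduct, hC, hR] using hv
      have : (Phat G P del (t + 1) *ᵥ y) (Sum.inr d) = y (Sum.inl (G.src (edgeOf d))) := by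
        simp [Phat, mulVec, dotProduct, hC, hR, hsent]
      rw [this]
      exact hy _ trivial
    · have hp : phi G del t p = 1 := by
        simpa [phi, mulVec, dotProduct, hC, hR] using hv
      have : (Phat G P del (t + 1) *ᵥ y) (Sum.inr d) = y (Sum.inr p) := by
        simp [Phat, mulVec, dotProduct, hC, hR]
      rw [this]
      exact hy _ hp

/-- A lower bound on the occupied coordinates is preserved by one transition. -/
lemma le_Phat_mulVec {G : DGraph n m} {P : Matrix (Fin n) (Fin n) ℝ}
    (hP : ∀ i j, 0 ≤ P i j) (hsum : ∀ i, ∑ j, P i j = 1)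
    (del : ℕ → Fin m → Fin (B + 1)) (t : ℕ) {y : Fin n ⊕ DelayNode m B → ℝ} {c : ℝ}
    (hy : ∀ v, occupied G del t v → c ≤ y v) (v : Fin n ⊕ DelayNode m B)
    (hv : occupied G del (t + 1) v) : c ≤ (Phat G P del (t + 1) *ᵥ y) v := by
  have := Phat_mulVec_le hP hsum del t (y := -y) (c := -c)
    (fun u hu => neg_le_neg (hy u hu)) v hv
  rw [mulVec_neg] at this
  exact neg_le_neg_iff.1 this

lemma occupied_values_nonempty (hn : 0 < n) (G : DGraph n m) (P : Matrix (Fin n) (Fin n) ℝ)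
    (del : ℕ → Fin m → Fin (B + 1)) (x0 : Fin n → ℝ) (t : ℕ) :
    {y : ℝ | ∃ v, occupied G del t v ∧ xhat G P del x0 t v = y}.Nonempty :=
  ⟨_, Sum.inl ⟨0, hn⟩, trivial, rfl⟩

lemma occupied_values_finite (G : DGraph n m) (P : Matrix (Fin n) (Fin n) ℝ)
    (del : ℕ → Fin m → Fin (B + 1)) (x0 : Fin n → ℝ) (t : ℕ) :
    {y : ℝ | ∃ v, occupied G del t v ∧ xhat G P del x0 t v = y}.Finite :=
  (Set.finite_range (xhat G P del x0 t)).subset fun _ ⟨v, _, hv⟩ => ⟨v, hv⟩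

lemma occMax_antitone (hn : 0 < n) {G : DGraph n m} {P : Matrix (Fin n) (Fin n) ℝ}
    (hP : ∀ i j, 0 ≤ P i j) (hsum : ∀ i, ∑ j, P i j = 1)
    (del : ℕ → Fin m → Fin (B + 1)) (x0 : Fin n → ℝ) : Antitone (occMax G P del x0) := by
  refine antitone_nat_of_succ_le fun t => csSup_le (occupied_values_nonempty hn G P del x0 _) ?_
  rintro _ ⟨v, hv, rfl⟩
  exact Phat_mulVec_le hP hsum del t (fun u hu =>
    le_csSup (occupied_values_finite G P del x0 t).bddAbove ⟨u, hu, rfl⟩) v hv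

lemma occMin_monotone (hn : 0 < n) {G : DGraph n m} {P : Matrix (Fin n) (Fin n) ℝ}
    (hP : ∀ i j, 0 ≤ P i j) (hsum : ∀ i, ∑ j, P i j = 1)
    (del : ℕ → Fin m → Fin (B + 1)) (x0 : Fin n → ℝ) : Monotone (occMin G P del x0) := by
  refine monotone_nat_of_le_succ fun t => le_csInf (occupied_values_nonempty hn G P del x0 _) ?_
  rintro _ ⟨v, hv, rfl⟩
  exact le_Phat_mulVec hP hsum del t (fun u hu =>
    csInf_le (occupied_values_finite G P del x0 t).bddBelow ⟨u, hu, rfl⟩) v hv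

end RandomDelay

open RandomDelay in
/-- **Non-expansiveness over `2B+1` iterations.**  For every realization of the
delays, the maximum over occupied coordinates does not increase, and the minimum
over occupied coordinates does not decrease, from time `t` to time `t + (2B+1)`. -/
theorem random_delay_nonexpansive
    {n m B : ℕ} (hn : 0 < n) (hB : 1 ≤ B)
    (G : DGraph n m) (P : Matrix (Fin n) (Fin n) ℝ) (hV : G.Valid P)
    (del : ℕ → Fin m → Fin (B + 1)) (x0 : Fin n → ℝ) (t : ℕ) :
    occMax G P del x0 (t + (2 * B + 1)) ≤ occMax G P del x0 t ∧
    occMin G P del x0 t ≤ occMin G P del x0 (t + (2 * B + 1)) := by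
  exact ⟨occMax_antitone hn hV.nonneg hV.rowSum del x0 (Nat.le_add_right _ _),
    occMin_monotone hn hV.nonneg hV.rowSum del x0 (Nat.le_add_right _ _)⟩
end

section
/- For every t ≥ 1, every nonzero row of M₂(t) has entries summing to exactly 1. -/
open Matrix Filter BigOperators
open scoped Classical

namespace RandomDelay

variable {n m B : ℕ}

/-- Each row of `R(t)` sums to `1` if a message is routed into that node, and to `0` otherwise. -/
lemma Rmat_row_sum (G : DGraph n m) (del : ℕ → Fin m → Fin (B + 1)) (t : ℕ)
    (d : DelayNode m B) :
    ∑ j, Rmat G del t d j =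
      if posIdx d = 0 ∧ (del t (edgeOf d)).1 = lenIdx d + 1 then 1 else 0 := by
  simp only [Rmat, ite_and, Finset.sum_ite_eq, Finset.mem_univ, if_true]

lemma phi_succ_apply (G : DGraph n m) (del : ℕ → Fin m → Fin (B + 1)) (t : ℕ)
    (d : DelayNode m B) :
    phi G del (t + 1) d =
      ∑ j, Rmat G del (t + 1) d j + ∑ d', Cmat m B d d' * phi G del t d' := by
  simp [phi, Matrix.mulVec, dotProduct]

/-- A first node of a chain has no predecessor. -/
lemma Cmat_eq_zero_of_posIdx_eq_zero {d : DelayNode m B} (h : posIdx d = 0)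
    (d' : DelayNode m B) : Cmat m B d d' = 0 := by
  simp [Cmat, h]

/-- A delay node has at most one predecessor. -/
lemma eq_of_Cmat_ne_zero {d d₁ d₂ : DelayNode m B} (h₁ : Cmat m B d d₁ ≠ 0)
    (h₂ : Cmat m B d d₂ ≠ 0) : d₁ = d₂ := by
  simp only [Cmat, ne_eq, ite_eq_right_iff, one_ne_zero, imp_false, not_not] at h₁ h₂
  obtain ⟨e₁, l₁, p₁⟩ := h₁
  obtain ⟨e₂, l₂, p₂⟩ := h₂
  refine Subtype.ext (Prod.ext (e₁.symm.trans e₂) (Prod.ext (l₁.symm.trans l₂) (Fin.ext ?_)))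
  unfold posIdx at p₁ p₂
  omega

lemma Cmat_eq_zero_or_one (d d' : DelayNode m B) : Cmat m B d d' = 0 ∨ Cmat m B d d' = 1 := by
  unfold Cmat
  split_ifs <;> simp

/-- Only occupied terminal nodes deliver, so `P̄[φ(t)]` absorbs the factor `φ(t)`. -/
lemma PFmat_mul_phi (G : DGraph n m) (P : Matrix (Fin n) (Fin n) ℝ)
    (del : ℕ → Fin m → Fin (B + 1)) (t : ℕ) (i : Fin n) (d : DelayNode m B) :
    PFmat G P del (t + 1) i d * phi G del t d = PFmat G P del (t + 1) i d := by
  rcases phi_eq_zero_or_one G del t d with h | h <;> simp [PFmat, h]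

lemma P11_row_sum (G : DGraph n m) (P : Matrix (Fin n) (Fin n) ℝ)
    (del : ℕ → Fin m → Fin (B + 1)) (t : ℕ) (i : Fin n) :
    ∑ j, P11 G P del t i j = 1 - ∑ d, PFmat G P del t i d := by
  simp [P11, Finset.sum_add_distrib, Finset.sum_sub_distrib, Matrix.one_apply,
    Matrix.diagonal_apply]
  ring

lemma M1_succ_apply (G : DGraph n m) (P : Matrix (Fin n) (Fin n) ℝ)
    (del : ℕ → Fin m → Fin (B + 1)) (t : ℕ) (i j : Fin n) :
    M1 G P del (t + 1) i j = ∑ k, P11 G P del (t + 1) i k * M1 G P del t k j +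
      ∑ d, PFmat G P del (t + 1) i d * M2 G P del t d j := by
  simp [M1, M2, Mprod, Matrix.mul_apply, Phat]

lemma M2_succ_apply (G : DGraph n m) (P : Matrix (Fin n) (Fin n) ℝ)
    (del : ℕ → Fin m → Fin (B + 1)) (t : ℕ) (d : DelayNode m B) (j : Fin n) :
    M2 G P del (t + 1) d j = ∑ k, Rmat G del (t + 1) d k * M1 G P del t k j +
      ∑ d', Cmat m B d d' * M2 G P del t d' j := by
  simp [M1, M2, Mprod, Matrix.mul_apply, Phat]

/-- The rows of `M₁(t)` sum to `1` and the rows of `M₂(t)` sum to the occupancy vector. -/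
lemma M1_M2_row_sum (G : DGraph n m) (P : Matrix (Fin n) (Fin n) ℝ)
    (del : ℕ → Fin m → Fin (B + 1)) (t : ℕ) :
    (∀ i, ∑ j, M1 G P del t i j = 1) ∧ ∀ d, ∑ j, M2 G P del t d j = phi G del t d := by
  induction t with
  | zero => constructor <;> intro <;> simp [M1, M2, Mprod, phi, Matrix.one_apply]
  | succ t ih =>
    obtain ⟨ih₁, ih₂⟩ := ih
    constructor
    · intro i
      simp only [M1_succ_apply, Finset.sum_add_distrib]
      rw [Finset.sum_comm, Finset.sum_comm (t := (Finset.univ : Finset (DelayNode m B)))]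
      simp only [← Finset.mul_sum, ih₁, ih₂, mul_one, PFmat_mul_phi, P11_row_sum]
      ring
    · intro d
      simp only [M2_succ_apply, Finset.sum_add_distrib]
      rw [Finset.sum_comm, Finset.sum_comm (t := (Finset.univ : Finset (DelayNode m B)))]
      simp only [← Finset.mul_sum, ih₁, ih₂, mul_one, phi_succ_apply]

/-- The rows of `M₂(t)` at unoccupied delay nodes vanish. -/
lemma M2_eq_zero_of_phi_eq_zero (G : DGraph n m) (P : Matrix (Fin n) (Fin n) ℝ)
    (del : ℕ → Fin m → Fin (B + 1)) (t : ℕ) (d : DelayNode m B) (h : phi G del t d = 0)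
    (j : Fin n) : M2 G P del t d j = 0 := by
  induction t generalizing d with
  | zero => simp [M2, Mprod]
  | succ t ih =>
    have hR : ∀ k ∈ Finset.univ, 0 ≤ Rmat G del (t + 1) d k := by
      intro k _
      unfold Rmat
      split_ifs <;> simp
    have hC : ∀ d' ∈ Finset.univ, 0 ≤ Cmat m B d d' * phi G del t d' := by
      intro d' _
      rcases Cmat_eq_zero_or_one d d' with hc | hc <;>
        rcases phi_eq_zero_or_one G del t d' with hp | hp <;> simp [hc, hp]
    rw [phi_succ_apply, add_eq_zero_iff_of_nonneg (Finset.sum_nonneg hR) (Finset.sum_nonneg hC),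
      Finset.sum_eq_zero_iff_of_nonneg hR, Finset.sum_eq_zero_iff_of_nonneg hC] at h
    rw [M2_succ_apply, Finset.sum_eq_zero, Finset.sum_eq_zero, add_zero]
    · intro d' hd'
      rcases mul_eq_zero.mp (h.2 d' hd') with hc | hp
      · rw [hc, zero_mul]
      · rw [ih d' hp, mul_zero]
    · intro k hk
      rw [h.1 k hk, zero_mul]

end RandomDelay

open RandomDelay in
/-- **Nonzero rows of `M₂(t)` sum to one.**  For every `t ≥ 1`, every nonzero row
of the bottom-left block `M₂(t)` of `M(t) = P̂(t)⋯P̂(1)` has entries summing to `1`. -/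
theorem random_delay_M2_rows_sum_one
    {n m B : ℕ} (hn : 0 < n) (hB : 1 ≤ B)
    (G : DGraph n m) (P : Matrix (Fin n) (Fin n) ℝ) (hV : G.Valid P)
    (del : ℕ → Fin m → Fin (B + 1)) (t : ℕ) (ht : 1 ≤ t) (d : DelayNode m B)
    (hd : ∃ j, M2 G P del t d j ≠ 0) :
    ∑ j, M2 G P del t d j = 1 := by
  obtain ⟨j, hj⟩ := hd
  rw [(M1_M2_row_sum G P del t).2 d]
  exact (phi_eq_zero_or_one G del t d).resolve_left fun h =>
    hj (M2_eq_zero_of_phi_eq_zero G P del t d h j)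
end

section
/- For every realization of the bounded time-varying delays, Push-Sum achieves average consensus at a geometric rate: for every compute node i with 1 ≤ i ≤ n, ŝ_i(t)/ŵ_i(t) → (1/n)·Σ_{j=1}^n x_j(0) as t → ∞; moreover there exists c₀ ∈ [0,1), depending only on G, P and B (not on the realization of the delays), such that, with D̂ = (B+1)·D + B + 1, the forward products F(1,t) = P̂(1)ᵀ·P̂(2)ᵀ⋯P̂(t)ᵀ satisfy τ₁(F(1,t)) ≤ c₀^{⌊t/(D̂+1)⌋}, where τ₁(M) = (1/2)·max_{i,j} Σ_k |M_{ik} − M_{jk}| is the coefficient of ergodicity. -/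
open Matrix Filter BigOperators
open scoped Classical

noncomputable section

/-- `y` is reachable from `x` by a directed path using at most `k` edges. -/
def ReachWithin {α : Type*} (adj : α → α → Prop) (k : ℕ) (x y : α) : Prop :=
  ∃ l : List α, l.length ≤ k ∧ List.Chain adj x l ∧
    (x :: l).getLast (List.cons_ne_nil x l) = y

/-- `D` is the diameter of the graph with adjacency relation `adj`: every node is
reachable from every node within `D` steps, and some ordered pair of nodes
requires `D` steps. -/
def IsDiameter {α : Type*} (adj : α → α → Prop) (D : ℕ) : Prop :=
  (∀ x y, ReachWithin adj D x y) ∧ (∃ x y, ∀ k, ReachWithin adj k x y → D ≤ k)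

/-- The adjacency relation of `G`. -/
def DGraph.adj {n m : ℕ} (G : DGraph n m) (a b : Fin n) : Prop :=
  ∃ e, G.src e = a ∧ G.tgt e = b

/-- Hypotheses of the Push-Sum random-delay model: no self-loops, distinct edges,
`P` column stochastic respecting `G` (hence with positive diagonal), and `G`
strongly connected. -/
structure DGraph.ValidCol {n m : ℕ} (G : DGraph n m) (P : Matrix (Fin n) (Fin n) ℝ) : Prop where
  noSelf : ∀ e, G.src e ≠ G.tgt e
  edgeInj : ∀ e e', G.src e = G.src e' → G.tgt e = G.tgt e' → e = e'
  nonneg : ∀ i j, 0 ≤ P i j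
  colSum : ∀ j, ∑ i, P i j = 1
  support : ∀ i j, 0 < P i j ↔ i = j ∨ ∃ e, G.src e = j ∧ G.tgt e = i
  connected : ∀ i j : Fin n, Relation.ReflTransGen G.adj i j

namespace PushSumDelay

variable {n m B : ℕ}

/-- The edge a delay node belongs to. -/
def edgeOf (d : DelayNode m B) : Fin m := d.val.1
/-- The chain (of length `lenIdx d + 1`) a delay node belongs to. -/
def lenIdx (d : DelayNode m B) : ℕ := d.val.2.1.1
/-- The (0-indexed) position of a delay node along its chain. -/
def posIdx (d : DelayNode m B) : ℕ := d.val.2.2.1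
/-- `d` is the terminal node of its chain. -/
def isTerminal (d : DelayNode m B) : Prop := d.val.2.2 = d.val.2.1

/-- The fixed block-diagonal forward-shift matrix `C`. -/
def Cmat (m B : ℕ) : Matrix (DelayNode m B) (DelayNode m B) ℝ := fun d d' =>
  if d.val.1 = d'.val.1 ∧ d.val.2.1 = d'.val.2.1 ∧ posIdx d = posIdx d' + 1 then 1 else 0

/-- The fixed delivery matrix `J`: `J i d = 1` iff `d` is the terminal node of a
chain on an edge pointing into compute node `i`. -/
def Jmat (G : DGraph n m) (B : ℕ) : Matrix (Fin n) (DelayNode m B) ℝ := fun i d =>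
  if G.tgt (edgeOf d) = i ∧ isTerminal d then 1 else 0

/-- `L(t)`: zero-delay deliveries. -/
def Lmat (G : DGraph n m) (del : ℕ → Fin m → Fin (B + 1)) (t : ℕ) :
    Matrix (Fin n) (Fin n) ℝ := fun i j =>
  if ∃ e, G.src e = j ∧ G.tgt e = i ∧ (del t e).1 = 0 then 1 else 0

/-- `R(t)`: routing of messages into delay chains. -/
def Rmat (G : DGraph n m) (del : ℕ → Fin m → Fin (B + 1)) (t : ℕ) :
    Matrix (DelayNode m B) (Fin n) ℝ := fun d j =>
  if G.src (edgeOf d) = j ∧ posIdx d = 0 ∧ (del t (edgeOf d)).1 = lenIdx d + 1 then 1 else 0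

/-- `P̄[R(t)]`: each `1` of `R(t)` (message from `j` routed into a chain towards
`i = tgt e`) is replaced by the Push-Sum share `P i j`. -/
def PRmat (G : DGraph n m) (P : Matrix (Fin n) (Fin n) ℝ)
    (del : ℕ → Fin m → Fin (B + 1)) (t : ℕ) : Matrix (DelayNode m B) (Fin n) ℝ := fun d j =>
  Rmat G del t d j * P (G.tgt (edgeOf d)) j

/-- The Push-Sum delayed transition matrix
`P̂(t) = [[diag(P) + P∘L(t), J], [P̄[R(t)], C]]`. -/
def Phat (G : DGraph n m) (P : Matrix (Fin n) (Fin n) ℝ)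
    (del : ℕ → Fin m → Fin (B + 1)) (t : ℕ) :
    Matrix (Fin n ⊕ DelayNode m B) (Fin n ⊕ DelayNode m B) ℝ :=
  Matrix.fromBlocks
    (fun i j => (if i = j then P i j else 0) + P i j * Lmat G del t i j)
    (Jmat G B) (PRmat G P del t) (Cmat m B)

/-- Push-Sum sums: `ŝ(0) = (x(0), 0_b)`, `ŝ(t) = P̂(t)·ŝ(t−1)`. -/
def shat (G : DGraph n m) (P : Matrix (Fin n) (Fin n) ℝ)
    (del : ℕ → Fin m → Fin (B + 1)) (x0 : Fin n → ℝ) :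
    ℕ → (Fin n ⊕ DelayNode m B) → ℝ
  | 0 => Sum.elim x0 (fun _ => 0)
  | t + 1 => Phat G P del (t + 1) *ᵥ shat G P del x0 t

/-- Push-Sum weights: `ŵ(0) = (1_n, 0_b)`, `ŵ(t) = P̂(t)·ŵ(t−1)`. -/
def what (G : DGraph n m) (P : Matrix (Fin n) (Fin n) ℝ)
    (del : ℕ → Fin m → Fin (B + 1)) :
    ℕ → (Fin n ⊕ DelayNode m B) → ℝ
  | 0 => Sum.elim (fun _ => 1) (fun _ => 0)
  | t + 1 => Phat G P del (t + 1) *ᵥ what G P del t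

/-- Forward products of transposes: `Fprod r k = P̂(r)ᵀ·P̂(r+1)ᵀ⋯P̂(r+k)ᵀ`,
i.e. `F(r, r+k)` in the paper's notation. -/
def Fprod (G : DGraph n m) (P : Matrix (Fin n) (Fin n) ℝ)
    (del : ℕ → Fin m → Fin (B + 1)) (r : ℕ) :
    ℕ → Matrix (Fin n ⊕ DelayNode m B) (Fin n ⊕ DelayNode m B) ℝ
  | 0 => (Phat G P del r)ᵀ
  | k + 1 => Fprod G P del r k * (Phat G P del (r + k + 1))ᵀ

/-- The coefficient of ergodicity `τ₁(M) = (1/2)·max_{i,j} Σ_k |M_{ik} − M_{jk}|`. -/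
def tau1 {V : Type*} [Fintype V] (M : Matrix V V ℝ) : ℝ :=
  sSup {z : ℝ | ∃ i j, z = (1 / 2) * ∑ k, |M i k - M j k|}

/-- The improper coefficient of ergodicity `c(M) = 1 − max_s min_k M_{ks}`. -/
def cErg {V : Type*} [Fintype V] (M : Matrix V V ℝ) : ℝ :=
  1 - sSup {z : ℝ | ∃ s, z = sInf {y : ℝ | ∃ k, y = M k s}}

end PushSumDelay

end

namespace PushSumDelay

section Products

variable {V : Type*} [Fintype V]

/-- The backward product `A (t + k) * ⋯ * A (t + 1)`. -/
noncomputable def backProd (A : ℕ → Matrix V V ℝ) (t : ℕ) : ℕ → Matrix V V ℝ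
  | 0 => 1
  | k + 1 => A (t + k + 1) * backProd A t k

/-- `M` is nonnegative with unit column sums. -/
def ColStochastic (M : Matrix V V ℝ) : Prop :=
  (∀ i j, 0 ≤ M i j) ∧ ∀ j, ∑ i, M i j = 1

theorem backProd_add (A : ℕ → Matrix V V ℝ) (t a b : ℕ) :
    backProd A t (a + b) = backProd A (t + a) b * backProd A t a := by
  induction b with
  | zero => simp [backProd]
  | succ b ih => rw [← add_assoc, backProd, ih, backProd, Matrix.mul_assoc, add_assoc t a b]

theorem ColStochastic.sum_mulVec {M : Matrix V V ℝ} (hM : ColStochastic M) (v : V → ℝ) :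
    ∑ i, (M *ᵥ v) i = ∑ j, v j := by
  simp only [Matrix.mulVec, dotProduct]
  rw [Finset.sum_comm]
  simp [← Finset.sum_mul, hM.2]

theorem ColStochastic.mul {M N : Matrix V V ℝ} (hM : ColStochastic M) (hN : ColStochastic N) :
    ColStochastic (M * N) := by
  refine ⟨fun i j => ?_, fun j => ?_⟩
  · rw [Matrix.mul_apply]
    exact Finset.sum_nonneg fun k _ => mul_nonneg (hM.1 _ _) (hN.1 _ _)
  · exact (hM.sum_mulVec fun k => N k j).trans (hN.2 j)

theorem colStochastic_one : ColStochastic (1 : Matrix V V ℝ) := by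
  refine ⟨fun i j => ?_, fun j => ?_⟩
  · rw [Matrix.one_apply]
    split_ifs <;> norm_num
  · simp [Matrix.one_apply]

theorem colStochastic_backProd {A : ℕ → Matrix V V ℝ} (hA : ∀ t, ColStochastic (A t))
    (t k : ℕ) : ColStochastic (backProd A t k) := by
  induction k with
  | zero => exact colStochastic_one
  | succ k ih => exact (hA _).mul ih

theorem ColStochastic.sum_abs_mulVec_le {M : Matrix V V ℝ} (hM : ColStochastic M) (v : V → ℝ) :
    ∑ i, |(M *ᵥ v) i| ≤ ∑ j, |v j| := by
  rw [← hM.sum_mulVec fun j => |v j|]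
  refine Finset.sum_le_sum fun i _ => ?_
  simp only [Matrix.mulVec, dotProduct]
  refine (Finset.abs_sum_le_sum_abs _ _).trans (le_of_eq ?_)
  exact Finset.sum_congr rfl fun j _ => by rw [abs_mul, abs_of_nonneg (hM.1 i j)]

/-- A uniform lower bound on one row makes a column stochastic matrix contract the `ℓ¹` norm of
vectors of zero sum. -/
theorem ColStochastic.sum_abs_mulVec_le_of_row {M : Matrix V V ℝ} (hM : ColStochastic M)
    {s : V} {δ : ℝ} (hs : ∀ k, δ ≤ M s k) {v : V → ℝ} (hv : ∑ j, v j = 0) :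
    ∑ i, |(M *ᵥ v) i| ≤ (1 - δ) * ∑ j, |v j| := by
  have key : ∀ i, |(M *ᵥ v) i| ≤ ∑ j, (M i j - if i = s then δ else 0) * |v j| := by
    intro i
    have h : (M *ᵥ v) i = ∑ j, (M i j - if i = s then δ else 0) * v j := by
      simp [Matrix.mulVec, dotProduct, sub_mul, Finset.sum_sub_distrib, ← Finset.mul_sum, hv]
    rw [h]
    refine (Finset.abs_sum_le_sum_abs _ _).trans (le_of_eq ?_)
    refine Finset.sum_congr rfl fun j _ => ?_
    rw [abs_mul, abs_of_nonneg]
    split_ifs with his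
    · subst his
      linarith [hs j]
    · simpa using hM.1 i j
  refine (Finset.sum_le_sum fun i _ => key i).trans (le_of_eq ?_)
  rw [Finset.sum_comm, Finset.mul_sum]
  refine Finset.sum_congr rfl fun j _ => ?_
  rw [← Finset.sum_mul, Finset.sum_sub_distrib, hM.2]
  simp

theorem sum_abs_backProd_mulVec_le {A : ℕ → Matrix V V ℝ} (hA : ∀ t, ColStochastic (A t))
    {K : ℕ} {s : V} {δ : ℝ} (hδ : δ ≤ 1) (hs : ∀ t k, δ ≤ backProd A t K s k)
    {v : V → ℝ} (hv : ∑ j, v j = 0) (t : ℕ) :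
    ∑ i, |(backProd A 0 t *ᵥ v) i| ≤ (1 - δ) ^ (t / K) * ∑ j, |v j| := by
  have blocks : ∀ q, ∑ i, |(backProd A 0 (K * q) *ᵥ v) i| ≤ (1 - δ) ^ q * ∑ j, |v j| := by
    intro q
    induction q with
    | zero => simp [backProd]
    | succ q ih =>
      rw [Nat.mul_succ, backProd_add, ← Matrix.mulVec_mulVec]
      refine ((colStochastic_backProd hA _ _).sum_abs_mulVec_le_of_row (hs _) ?_).trans ?_
      · rw [(colStochastic_backProd hA _ _).sum_mulVec, hv]
      · rw [pow_succ', mul_assoc]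
        exact mul_le_mul_of_nonneg_left ih (by linarith)
  conv_lhs => rw [← Nat.div_add_mod t K]
  rw [backProd_add]
  simp only [← Matrix.mulVec_mulVec]
  exact ((colStochastic_backProd hA _ _).sum_abs_mulVec_le _).trans (blocks _)

/-- Lower bounds on entries of consecutive backward products multiply. -/
theorem pow_le_backProd_trans {A : ℕ → Matrix V V ℝ} (hA : ∀ t, ColStochastic (A t))
    {ε : ℝ} (hε : 0 ≤ ε) {t a b : ℕ} {i j k : V} (h₁ : ε ^ a ≤ backProd A t a j i)
    (h₂ : ε ^ b ≤ backProd A (t + a) b k j) : ε ^ (a + b) ≤ backProd A t (a + b) k i := by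
  rw [backProd_add, Matrix.mul_apply]
  calc ε ^ (a + b) = ε ^ b * ε ^ a := by ring
    _ ≤ backProd A (t + a) b k j * backProd A t a j i :=
        mul_le_mul h₂ h₁ (pow_nonneg hε _) ((pow_nonneg hε _).trans h₂)
    _ ≤ _ := Finset.single_le_sum
        (f := fun l => backProd A (t + a) b k l * backProd A t a l i)
        (fun l _ => mul_nonneg ((colStochastic_backProd hA _ _).1 _ _)
          ((colStochastic_backProd hA _ _).1 _ _)) (Finset.mem_univ j)

theorem pow_le_backProd_one {A : ℕ → Matrix V V ℝ} {ε : ℝ} {t : ℕ} {i j : V}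
    (h : ε ≤ A (t + 1) i j) : ε ^ 1 ≤ backProd A t 1 i j := by
  simpa [backProd] using h

end Products

variable {n m B : ℕ} {G : DGraph n m} {P : Matrix (Fin n) (Fin n) ℝ}

theorem compute_column_split (hV : G.ValidCol P) (del : ℕ → Fin m → Fin (B + 1)) (t : ℕ)
    (i j : Fin n) :
    ((if i = j then P i j else 0) + P i j * Lmat G del t i j) +
      ∑ d : DelayNode m B, (if G.tgt (edgeOf d) = i then PRmat G P del t d j else 0) = P i j := by
  by_cases hij : i = j
  · subst hij
    have hL : Lmat G del t i i = 0 :=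
      if_neg fun ⟨e, h₁, h₂, _⟩ => hV.noSelf e (h₁.trans h₂.symm)
    rw [hL, Finset.sum_eq_zero]
    · simp
    · intro d _
      split_ifs with h
      · have : ¬ G.src (edgeOf d) = i := fun h' => hV.noSelf _ (h'.trans h.symm)
        simp [PRmat, Rmat, this]
      · rfl
  by_cases he : ∃ e, G.src e = j ∧ G.tgt e = i
  · obtain ⟨e, rfl, rfl⟩ := he
    by_cases hdel : (del t e).1 = 0
    · have hL : Lmat G del t (G.tgt e) (G.src e) = 1 := if_pos ⟨e, rfl, rfl, hdel⟩
      rw [hL, Finset.sum_eq_zero, if_neg hij]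
      · simp
      · intro d _
        split_ifs with h
        · have : ¬ (G.src (edgeOf d) = G.src e ∧ posIdx d = 0 ∧
              (del t (edgeOf d)).1 = lenIdx d + 1) := by
            rintro ⟨h₁, -, h₃⟩
            rw [hV.edgeInj _ _ h₁ h] at h₃
            omega
          simp [PRmat, Rmat, this]
        · rfl
    · have hL : Lmat G del t (G.tgt e) (G.src e) = 0 := by
        refine if_neg ?_
        rintro ⟨e', h₁, h₂, h₃⟩
        rw [hV.edgeInj _ _ h₁ h₂] at h₃
        exact hdel h₃
      have hlt := (del t e).2
      let d₀ : DelayNode m B :=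
        ⟨(e, ⟨(del t e).1 - 1, by omega⟩, ⟨0, by omega⟩), Nat.zero_le _⟩
      rw [hL, if_neg hij, Finset.sum_eq_single d₀]
      · have : (del t e).1 = (del t e).1 - 1 + 1 := by omega
        simp [PRmat, Rmat, d₀, edgeOf, posIdx, lenIdx, ← this]
      · intro d _ hd
        split_ifs with h
        · have : ¬ (G.src (edgeOf d) = G.src e ∧ posIdx d = 0 ∧
              (del t (edgeOf d)).1 = lenIdx d + 1) := by
            rintro ⟨h₁, h₂, h₃⟩
            have hed := hV.edgeInj _ _ h₁ h
            rw [hed] at h₃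
            refine hd (Subtype.ext (Prod.ext hed (Prod.ext (Fin.ext ?_) (Fin.ext h₂))))
            change lenIdx d = (del t e).1 - 1
            omega
          simp [PRmat, Rmat, this]
        · rfl
      · simp
  · have hP : P i j = 0 := by
      refine le_antisymm (not_lt.1 fun h => ?_) (hV.nonneg i j)
      exact ((hV.support i j).1 h).elim hij he
    rw [hP, Finset.sum_eq_zero]
    · simp
    · intro d _
      split_ifs with h
      · simp [PRmat, h, hP]
      · rfl

theorem delay_column_sum (G : DGraph n m) (d : DelayNode m B) :
    ∑ i, Jmat G B i d + ∑ d', Cmat m B d' d = 1 := by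
  by_cases ht : isTerminal d
  · have hC : ∀ d', Cmat m B d' d = 0 := by
      intro d'
      refine if_neg ?_
      rintro ⟨-, h₂, h₃⟩
      have h₄ := d'.2
      rw [h₂, ← ht] at h₄
      simp only [posIdx] at h₃
      omega
    simp [hC, Jmat, ht]
  · have hlt : posIdx d < lenIdx d := lt_of_le_of_ne d.2 fun h => ht (Fin.ext h)
    have hB : lenIdx d < B := d.val.2.1.2
    let d₁ : DelayNode m B :=
      ⟨(d.val.1, d.val.2.1, ⟨posIdx d + 1, by omega⟩), hlt⟩
    rw [Finset.sum_eq_single d₁]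
    · simp [Jmat, ht, Cmat, d₁, posIdx]
    · intro d' _ hd'
      refine if_neg ?_
      rintro ⟨h₁, h₂, h₃⟩
      exact hd' (Subtype.ext (Prod.ext h₁ (Prod.ext h₂ (Fin.ext h₃))))
    · simp

theorem Lmat_nonneg (G : DGraph n m) (del : ℕ → Fin m → Fin (B + 1)) (t : ℕ) (i j : Fin n) :
    0 ≤ Lmat G del t i j := by
  unfold Lmat
  split_ifs <;> norm_num

theorem Phat_inl_inl (G : DGraph n m) (P : Matrix (Fin n) (Fin n) ℝ)
    (del : ℕ → Fin m → Fin (B + 1)) (t : ℕ) (i j : Fin n) :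
    Phat G P del t (Sum.inl i) (Sum.inl j) =
      (if i = j then P i j else 0) + P i j * Lmat G del t i j := rfl

theorem Phat_inl_inr (G : DGraph n m) (P : Matrix (Fin n) (Fin n) ℝ)
    (del : ℕ → Fin m → Fin (B + 1)) (t : ℕ) (i : Fin n) (d : DelayNode m B) :
    Phat G P del t (Sum.inl i) (Sum.inr d) = Jmat G B i d := rfl

theorem Phat_inr_inl (G : DGraph n m) (P : Matrix (Fin n) (Fin n) ℝ)
    (del : ℕ → Fin m → Fin (B + 1)) (t : ℕ) (d : DelayNode m B) (j : Fin n) :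
    Phat G P del t (Sum.inr d) (Sum.inl j) = PRmat G P del t d j := rfl

theorem Phat_inr_inr (G : DGraph n m) (P : Matrix (Fin n) (Fin n) ℝ)
    (del : ℕ → Fin m → Fin (B + 1)) (t : ℕ) (d d' : DelayNode m B) :
    Phat G P del t (Sum.inr d) (Sum.inr d') = Cmat m B d d' := rfl

theorem colStochastic_Phat (hV : G.ValidCol P) (del : ℕ → Fin m → Fin (B + 1)) (t : ℕ) :
    ColStochastic (Phat G P del t) := by
  refine ⟨?_, ?_⟩
  · rintro (i | d) (j | d')
    · rw [Phat_inl_inl]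
      refine add_nonneg ?_ (mul_nonneg (hV.nonneg _ _) (Lmat_nonneg _ _ _ _ _))
      split_ifs
      exacts [hV.nonneg _ _, le_rfl]
    · rw [Phat_inl_inr, Jmat]
      split_ifs <;> norm_num
    · rw [Phat_inr_inl, PRmat, Rmat]
      refine mul_nonneg ?_ (hV.nonneg _ _)
      split_ifs <;> norm_num
    · rw [Phat_inr_inr, Cmat]
      split_ifs <;> norm_num
  · rintro (j | d)
    · rw [Fintype.sum_sum_type, ← hV.colSum j,
        ← Finset.sum_congr rfl fun i _ => compute_column_split hV del t i j,
        Finset.sum_add_distrib]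
      simp only [Phat_inl_inl, Phat_inr_inl]
      congr 1
      rw [Finset.sum_comm]
      simp
    · rw [Fintype.sum_sum_type]
      simpa only [Phat_inl_inr, Phat_inr_inr] using delay_column_sum G d

theorem pow_le_backProd_self (hV : G.ValidCol P) {ε : ℝ} (hε₀ : 0 < ε)
    (hεP : ∀ i j, 0 < P i j → ε ≤ P i j) (del : ℕ → Fin m → Fin (B + 1))
    (i : Fin n) (t k : ℕ) :
    ε ^ k ≤ backProd (Phat G P del) t k (Sum.inl i) (Sum.inl i) := by
  induction k with
  | zero => simp [backProd]
  | succ k ih =>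
    refine pow_le_backProd_trans (colStochastic_Phat hV del) hε₀.le ih (pow_le_backProd_one ?_)
    have hP := hεP i i ((hV.support i i).2 (Or.inl rfl))
    have hL := mul_nonneg (hV.nonneg i i) (Lmat_nonneg G del (t + k + 1) i i)
    rw [Phat_inl_inl, if_pos rfl]
    linarith

/-- A lower bound at a compute node persists, by the positive diagonal. -/
theorem pow_le_backProd_of_le (hV : G.ValidCol P) {ε : ℝ} (hε₀ : 0 < ε)
    (hεP : ∀ i j, 0 < P i j → ε ≤ P i j) (del : ℕ → Fin m → Fin (B + 1))
    {t a b : ℕ} (hab : a ≤ b) {i : Fin n} {u : Fin n ⊕ DelayNode m B}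
    (h : ε ^ a ≤ backProd (Phat G P del) t a (Sum.inl i) u) :
    ε ^ b ≤ backProd (Phat G P del) t b (Sum.inl i) u := by
  obtain ⟨c, rfl⟩ := Nat.exists_eq_add_of_le hab
  exact pow_le_backProd_trans (colStochastic_Phat hV del) hε₀.le h
    (pow_le_backProd_self hV hε₀ hεP del i (t + a) c)

/-- A delay node delivers to its target after the remaining length of its chain. -/
theorem pow_le_backProd_chain (hV : G.ValidCol P) {ε : ℝ} (hε₀ : 0 < ε) (hε₁ : ε ≤ 1)
    (del : ℕ → Fin m → Fin (B + 1))
    (r : ℕ) (t : ℕ) (d : DelayNode m B) (hr : lenIdx d = posIdx d + r) :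
    ε ^ (r + 1) ≤ backProd (Phat G P del) t (r + 1) (Sum.inl (G.tgt (edgeOf d))) (Sum.inr d) := by
  induction r generalizing t d with
  | zero =>
    refine pow_le_backProd_one ?_
    have ht : isTerminal d := Fin.ext hr.symm
    simpa [Phat_inl_inr, Jmat, ht] using hε₁
  | succ r ih =>
    have hB : lenIdx d < B := d.val.2.1.2
    let d₁ : DelayNode m B :=
      ⟨(d.val.1, d.val.2.1, ⟨posIdx d + 1, by omega⟩), by
        change posIdx d + 1 ≤ lenIdx d
        omega⟩
    have h₁ : ε ^ 1 ≤ backProd (Phat G P del) t 1 (Sum.inr d₁) (Sum.inr d) := by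
      refine pow_le_backProd_one ?_
      rw [Phat_inr_inr]
      simpa [Cmat, d₁, posIdx] using hε₁
    have h₂ := ih (t + 1) d₁ (by
      change lenIdx d = posIdx d + 1 + r
      omega)
    rw [add_comm (r + 1) 1]
    exact pow_le_backProd_trans (colStochastic_Phat hV del) hε₀.le h₁ h₂

theorem pow_le_backProd_edge (hV : G.ValidCol P) {ε : ℝ} (hε₀ : 0 < ε) (hε₁ : ε ≤ 1)
    (hεP : ∀ i j, 0 < P i j → ε ≤ P i j) (del : ℕ → Fin m → Fin (B + 1))
    (t : ℕ) (e : Fin m) :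
    ε ^ (B + 1) ≤
      backProd (Phat G P del) t (B + 1) (Sum.inl (G.tgt e)) (Sum.inl (G.src e)) := by
  have hP : ε ≤ P (G.tgt e) (G.src e) := hεP _ _ ((hV.support _ _).2 (Or.inr ⟨e, rfl, rfl⟩))
  have hlt := (del (t + 1) e).2
  by_cases hdel : (del (t + 1) e).1 = 0
  · refine pow_le_backProd_of_le hV hε₀ hεP del (Nat.succ_le_succ (Nat.zero_le B))
      (pow_le_backProd_one ?_)
    have hL : Lmat G del (t + 1) (G.tgt e) (G.src e) = 1 := if_pos ⟨e, rfl, rfl, hdel⟩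
    have hne : G.tgt e ≠ G.src e := (hV.noSelf e).symm
    simpa [Phat_inl_inl, hL, hne] using hP
  · let d₀ : DelayNode m B :=
      ⟨(e, ⟨(del (t + 1) e).1 - 1, by omega⟩, ⟨0, by omega⟩), Nat.zero_le _⟩
    have h₁ : ε ^ 1 ≤ backProd (Phat G P del) t 1 (Sum.inr d₀) (Sum.inl (G.src e)) := by
      refine pow_le_backProd_one ?_
      have : (del (t + 1) e).1 = (del (t + 1) e).1 - 1 + 1 := by omega
      rw [Phat_inr_inl]
      simpa [PRmat, Rmat, d₀, edgeOf, posIdx, lenIdx, ← this] using hP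
    have h₂ := pow_le_backProd_chain hV hε₀ hε₁ del ((del (t + 1) e).1 - 1) (t + 1) d₀
      (by simp [d₀, lenIdx, posIdx])
    exact pow_le_backProd_of_le hV hε₀ hεP del (by omega)
      (pow_le_backProd_trans (colStochastic_Phat hV del) hε₀.le h₁ h₂)

theorem pow_le_backProd_path (hV : G.ValidCol P) {ε : ℝ} (hε₀ : 0 < ε) (hε₁ : ε ≤ 1)
    (hεP : ∀ i j, 0 < P i j → ε ≤ P i j) (del : ℕ → Fin m → Fin (B + 1))
    (l : List (Fin n)) (t : ℕ) (x : Fin n) (hl : List.IsChain G.adj (x :: l)) :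
    ε ^ ((B + 1) * l.length) ≤ backProd (Phat G P del) t ((B + 1) * l.length)
      (Sum.inl ((x :: l).getLast (List.cons_ne_nil x l))) (Sum.inl x) := by
  induction l generalizing t x with
  | nil => simp [backProd]
  | cons y l ih =>
    rw [List.isChain_cons_cons] at hl
    obtain ⟨⟨e, rfl, rfl⟩, hl⟩ := hl
    rw [List.length_cons, Nat.mul_succ, add_comm, List.getLast_cons (List.cons_ne_nil _ _)]
    exact pow_le_backProd_trans (colStochastic_Phat hV del) hε₀.le
      (pow_le_backProd_edge hV hε₀ hε₁ hεP del t e) (ih _ _ hl)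

theorem pow_le_backProd_window (hV : G.ValidCol P) {ε : ℝ} (hε₀ : 0 < ε) (hε₁ : ε ≤ 1)
    (hεP : ∀ i j, 0 < P i j → ε ≤ P i j) (del : ℕ → Fin m → Fin (B + 1))
    {D : ℕ} (hD : IsDiameter G.adj D) (t : ℕ) (i : Fin n) (u : Fin n ⊕ DelayNode m B) :
    ε ^ ((B + 1) * D + B + 1 + 1) ≤
      backProd (Phat G P del) t ((B + 1) * D + B + 1 + 1) (Sum.inl i) u := by
  have hcompute : ∀ t j, ε ^ ((B + 1) * D) ≤
      backProd (Phat G P del) t ((B + 1) * D) (Sum.inl i) (Sum.inl j) := by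
    intro t j
    obtain ⟨l, hl, hchain, rfl⟩ := hD.1 j i
    exact pow_le_backProd_of_le hV hε₀ hεP del (Nat.mul_le_mul_left _ hl)
      (pow_le_backProd_path hV hε₀ hε₁ hεP del l t j hchain)
  rcases u with j | d
  · exact pow_le_backProd_of_le hV hε₀ hεP del (by omega) (hcompute t j)
  · have hB : lenIdx d < B := d.val.2.1.2
    have hd : posIdx d ≤ lenIdx d := d.2
    refine pow_le_backProd_of_le hV hε₀ hεP del (a := lenIdx d - posIdx d + 1 + (B + 1) * D)
      (by omega) ?_
    exact pow_le_backProd_trans (colStochastic_Phat hV del) hε₀.le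
      (pow_le_backProd_chain hV hε₀ hε₁ del _ t d (by omega)) (hcompute _ _)

theorem exists_pos_le_of_pos (P : Matrix (Fin n) (Fin n) ℝ) :
    ∃ ε : ℝ, 0 < ε ∧ ε ≤ 1 ∧ ∀ i j, 0 < P i j → ε ≤ P i j := by
  let S : Finset ℝ := insert 1
    ((Finset.univ.image fun q : Fin n × Fin n => P q.1 q.2).filter (0 < ·))
  have hS : S.Nonempty := ⟨1, Finset.mem_insert_self _ _⟩
  refine ⟨S.min' hS, ?_, S.min'_le _ (Finset.mem_insert_self _ _), fun i j h => S.min'_le _ ?_⟩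
  · rw [Finset.lt_min'_iff]
    intro y hy
    rcases Finset.mem_insert.1 hy with rfl | hy
    exacts [one_pos, (Finset.mem_filter.1 hy).2]
  · exact Finset.mem_insert_of_mem
      (Finset.mem_filter.2 ⟨Finset.mem_image.2 ⟨(i, j), Finset.mem_univ _, rfl⟩, h⟩)

theorem shat_eq_backProd (G : DGraph n m) (P : Matrix (Fin n) (Fin n) ℝ)
    (del : ℕ → Fin m → Fin (B + 1)) (x0 : Fin n → ℝ) (t : ℕ) :
    shat G P del x0 t = backProd (Phat G P del) 0 t *ᵥ Sum.elim x0 fun _ => 0 := by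
  induction t with
  | zero => simp [shat, backProd]
  | succ t ih => rw [shat, ih, backProd, Matrix.mulVec_mulVec, zero_add]

theorem what_eq_shat (G : DGraph n m) (P : Matrix (Fin n) (Fin n) ℝ)
    (del : ℕ → Fin m → Fin (B + 1)) (t : ℕ) :
    what G P del t = shat G P del (fun _ => 1) t := by
  induction t with
  | zero => rfl
  | succ t ih => rw [what, ih, shat]

theorem Fprod_one_eq_transpose (G : DGraph n m) (P : Matrix (Fin n) (Fin n) ℝ)
    (del : ℕ → Fin m → Fin (B + 1)) (k : ℕ) :
    Fprod G P del 1 k = (backProd (Phat G P del) 0 (k + 1))ᵀ := by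
  induction k with
  | zero => simp [Fprod, backProd]
  | succ k ih =>
    rw [Fprod, ih, ← Matrix.transpose_mul, backProd.eq_2 _ _ (k + 1), zero_add, add_comm 1 k]

theorem tau1_transpose_backProd_le {V : Type*} [Fintype V] {A : ℕ → Matrix V V ℝ}
    (hA : ∀ t, ColStochastic (A t)) {K : ℕ} {s : V} {δ : ℝ} (hδ : δ ≤ 1)
    (hs : ∀ t k, δ ≤ backProd A t K s k) (t : ℕ) :
    tau1 (backProd A 0 t)ᵀ ≤ (1 - δ) ^ (t / K) := by
  have hpow : 0 ≤ (1 - δ) ^ (t / K) := pow_nonneg (by linarith) _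
  refine Real.sSup_le ?_ hpow
  rintro z ⟨i, j, rfl⟩
  have hv : ∑ k, (Pi.single i 1 - Pi.single j 1 : V → ℝ) k = 0 := by simp
  have hv' : ∑ k, |(Pi.single i 1 - Pi.single j 1 : V → ℝ) k| ≤ 2 := by
    calc ∑ k, |(Pi.single i 1 - Pi.single j 1 : V → ℝ) k|
        ≤ ∑ k, ((Pi.single i 1 : V → ℝ) k + (Pi.single j 1 : V → ℝ) k) := by
          refine Finset.sum_le_sum fun k _ => ?_
          simp only [Pi.sub_apply, Pi.single_apply]
          split_ifs <;> norm_num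
      _ = 2 := by
          rw [Finset.sum_add_distrib]
          simp
          norm_num
  have h := sum_abs_backProd_mulVec_le hA hδ hs hv t
  simp only [Matrix.mulVec_sub, Matrix.mulVec_single_one, Pi.sub_apply, Matrix.col_apply] at h
  simp only [Matrix.transpose_apply]
  simp only [Pi.sub_apply] at hv'
  linarith [mul_le_mul_of_nonneg_left hv' hpow]

theorem tendsto_ratio (hV : G.ValidCol P) {ε : ℝ} (hε₀ : 0 < ε) (hε₁ : ε ≤ 1)
    (del : ℕ → Fin m → Fin (B + 1))
    {K : ℕ} (hn : 0 < n) (hK : 0 < K)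
    (hw : ∀ t i u, ε ≤ backProd (Phat G P del) t K (Sum.inl i) u) (x0 : Fin n → ℝ) (i : Fin n) :
    Tendsto (fun t => shat G P del x0 t (Sum.inl i) / what G P del t (Sum.inl i))
      atTop (nhds ((∑ j, x0 j) / n)) := by
  have hn' : (0 : ℝ) < n := Nat.cast_pos.2 hn
  have hA := colStochastic_Phat hV del
  set μ : ℝ := (∑ j, x0 j) / n with hμ
  let v : Fin n ⊕ DelayNode m B → ℝ := Sum.elim (fun j => x0 j - μ) fun _ => 0
  have hv : ∑ u, v u = 0 := by
    simp [v, Fintype.sum_sum_type, Finset.sum_sub_distrib, hμ, mul_div_cancel₀ _ hn'.ne']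
  have herr : ∀ t, shat G P del x0 t (Sum.inl i) - μ * what G P del t (Sum.inl i) =
      (backProd (Phat G P del) 0 t *ᵥ v) (Sum.inl i) := by
    intro t
    have hsplit : v = (Sum.elim x0 fun _ => 0) - μ • Sum.elim (fun _ => 1) fun _ => 0 := by
      funext u
      rcases u with j | d <;> simp [v]
    rw [what_eq_shat, shat_eq_backProd, shat_eq_backProd, hsplit, Matrix.mulVec_sub,
      Matrix.mulVec_smul]
    simp
  have hweight : ∀ t, K ≤ t → ε * n ≤ what G P del t (Sum.inl i) := by
    intro t ht
    obtain ⟨a, rfl⟩ := Nat.exists_eq_add_of_le' ht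
    rw [what_eq_shat, shat_eq_backProd, backProd_add, ← Matrix.mulVec_mulVec, zero_add]
    set w := backProd (Phat G P del) 0 a *ᵥ Sum.elim (fun _ => (1 : ℝ)) fun _ => 0 with hwdef
    have hsum : ∑ u, w u = n := by
      rw [hwdef, (colStochastic_backProd hA _ _).sum_mulVec]
      simp [Fintype.sum_sum_type]
    have hw0 : ∀ u, 0 ≤ w u := by
      intro u
      refine Finset.sum_nonneg fun k _ => mul_nonneg ((colStochastic_backProd hA _ _).1 _ _) ?_
      rcases k with k | k <;> simp
    rw [← hsum, Finset.mul_sum]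
    exact Finset.sum_le_sum fun u _ => mul_le_mul_of_nonneg_right (hw a i u) (hw0 u)
  have hzero : Tendsto (fun t => (1 - ε) ^ (t / K) * (∑ u, |v u|) / (ε * n)) atTop (nhds 0) := by
    have h := (tendsto_pow_atTop_nhds_zero_of_lt_one (r := 1 - ε) (by linarith)
      (by linarith)).comp (Nat.tendsto_div_const_atTop hK.ne')
    simpa using (h.mul_const (∑ u, |v u|)).div_const (ε * n)
  rw [tendsto_iff_norm_sub_tendsto_zero]
  refine squeeze_zero' (Eventually.of_forall fun t => norm_nonneg _) ?_ hzero
  filter_upwards [eventually_ge_atTop K] with t ht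
  have hwt := hweight t ht
  have hεn : 0 < ε * n := mul_pos hε₀ hn'
  have hwpos := hεn.trans_le hwt
  rw [div_sub' hwpos.ne', mul_comm _ μ, herr, Real.norm_eq_abs, abs_div, abs_of_pos hwpos]
  refine div_le_div₀ (mul_nonneg (pow_nonneg (by linarith) _)
    (Finset.sum_nonneg fun u _ => abs_nonneg _)) ?_ hεn hwt
  refine le_trans ?_ (sum_abs_backProd_mulVec_le hA hε₁ (fun t u => hw t i u) hv t)
  exact Finset.single_le_sum (f := fun u => |(backProd (Phat G P del) 0 t *ᵥ v) u|)
    (fun u _ => abs_nonneg _) (Finset.mem_univ _)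

end PushSumDelay

open PushSumDelay Filter in
/-- **Push-Sum with bounded time-varying delays achieves average consensus at a
geometric rate.**  For every realization of the delays and every initial vector,
each compute node's ratio `ŝ_i(t)/ŵ_i(t)` converges to the average
`(1/n)·∑ j, x_j(0)`; moreover there is a `c₀ ∈ [0,1)`, depending only on `G`, `P`
and `B` (not on the realization), such that with `D̂ = (B+1)·D + B + 1` the forward
products `F(1,t) = P̂(1)ᵀ⋯P̂(t)ᵀ` satisfy `τ₁(F(1,t)) ≤ c₀ ^ ⌊t/(D̂+1)⌋`. -/
theorem pushSum_random_delay_average_consensus_geometric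
    {n m B D : ℕ} (hn : 0 < n) (hB : 1 ≤ B)
    (G : DGraph n m) (P : Matrix (Fin n) (Fin n) ℝ) (hV : G.ValidCol P)
    (hD : IsDiameter G.adj D) :
    ∃ c₀ : ℝ, 0 ≤ c₀ ∧ c₀ < 1 ∧
      ∀ (del : ℕ → Fin m → Fin (B + 1)) (x0 : Fin n → ℝ),
        (∀ i : Fin n,
          Tendsto
            (fun t => shat G P del x0 t (Sum.inl i) / what G P del t (Sum.inl i))
            atTop (nhds ((∑ j, x0 j) / n))) ∧
        (∀ t : ℕ, 1 ≤ t →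
          tau1 (Fprod G P del 1 (t - 1)) ≤
            c₀ ^ (t / ((B + 1) * D + B + 1 + 1))) := by
  obtain ⟨ε, hε₀, hε₁, hεP⟩ := exists_pos_le_of_pos P
  have hδ₀ : 0 < ε ^ ((B + 1) * D + B + 1 + 1) := pow_pos hε₀ _
  have hδ₁ : ε ^ ((B + 1) * D + B + 1 + 1) ≤ 1 := pow_le_one₀ hε₀.le hε₁
  refine ⟨1 - ε ^ ((B + 1) * D + B + 1 + 1), by linarith, by linarith, fun del x0 => ?_⟩
  have hw := pow_le_backProd_window hV hε₀ hε₁ hεP del hD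
  refine ⟨tendsto_ratio hV hδ₀ hδ₁ del hn (Nat.succ_pos _) hw x0, fun t ht => ?_⟩
  rw [Fprod_one_eq_transpose, Nat.sub_add_cancel ht]
  exact tau1_transpose_backProd_le (colStochastic_Phat hV del) hδ₁ (fun t u => hw t ⟨0, hn⟩ u) t
end
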